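/- Let 0 < δ < 1 and ε > 0, and assume Σ_{i=1}^d A_{i,i}² > 0. If the sample size N (a positive integer) satisfies N ≥ (1/(4εδ)) · [ (4d + 16)(tr(A))² + (d + 8)‖A + Aᵀ‖² + 20 Σ_{i=1}^d A_{i,i}² ] / ( Σ_{i=1}^d A_{i,i}² ), then with probability at least 1 − δ the estimator satisfies ‖g − diag(A)‖² ≤ ε · Σ_{i=1}^d A_{i,i}², where diag(A) = (A_{1,1},…,A_{d,d}) ∈ ℝ^d and ‖·‖ is the Euclidean norm on ℝ^d. -/

import Mathlib

open MeasureTheory ProbabilityTheory Finset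

noncomputable def stdGaussianVec (d : ℕ) : Measure (Fin d → ℝ) :=
  Measure.pi fun _ => gaussianReal 0 1

def quadForm {d : ℕ} (A : Matrix (Fin d) (Fin d) ℝ) (u : Fin d → ℝ) : ℝ :=
  ∑ i, ∑ j, A i j * u i * u j

instance stdGaussianVec_prob (d : ℕ) : IsProbabilityMeasure (stdGaussianVec d) := by
  unfold stdGaussianVec; infer_instance

lemma integrable_pow_gauss (n : ℕ) : Integrable (fun x : ℝ => x ^ n) (gaussianReal 0 1) := by
  rcases Nat.eq_zero_or_pos n with h | h
  · subst h; simp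
  have h1 := (memLp_id_gaussianReal (μ := 0) (v := 1) (n : NNReal)).integrable_norm_pow (by omega)
  refine h1.mono (by fun_prop) ?_
  filter_upwards with x
  simp

noncomputable def gmom (n : ℕ) : ℝ := ∫ x, x ^ n ∂(gaussianReal 0 1)

lemma gmom_zero : gmom 0 = 1 := by simp [gmom]

lemma integrable_pow_pdf (n : ℕ) :
    Integrable (fun x : ℝ => x ^ n * gaussianPDFReal 0 1 x) := by
  have h := integrable_pow_gauss n
  rw [gaussianReal_of_var_ne_zero 0 one_ne_zero,
    integrable_withDensity_iff_integrable_smul' (measurable_gaussianPDF 0 1)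
      (ae_of_all _ fun x => gaussianPDF_lt_top)] at h
  refine h.congr (ae_of_all _ fun x => ?_)
  simp [gaussianPDF, ENNReal.toReal_ofReal (gaussianPDFReal_nonneg 0 1 x), mul_comm]

lemma gmom_eq (n : ℕ) : gmom n = ∫ x : ℝ, x ^ n * gaussianPDFReal 0 1 x := by
  rw [gmom, integral_gaussianReal_eq_integral_smul one_ne_zero]
  simp [mul_comm]

lemma hasDerivAt_pdf (x : ℝ) :
    HasDerivAt (gaussianPDFReal 0 1) (-x * gaussianPDFReal 0 1 x) x := by
  unfold gaussianPDFReal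
  have h : HasDerivAt (fun x : ℝ => -(x - 0) ^ 2 / (2 * ((1 : NNReal) : ℝ))) (-x) x := by
    have := (((hasDerivAt_id x).sub_const 0).pow 2).neg.div_const (2 * ((1 : NNReal) : ℝ))
    convert! this using 1
    simp
    ring
  have := h.exp.const_mul (√(2 * Real.pi * ((1 : NNReal) : ℝ)))⁻¹
  convert! this using 1
  ring

lemma gmom_rec (n : ℕ) : gmom (n + 1) = n * gmom (n - 1) := by
  have key := integral_mul_deriv_eq_deriv_mul_of_integrable (u := fun x : ℝ => x ^ n)
    (u' := fun x : ℝ => n * x ^ (n - 1)) (v := gaussianPDFReal 0 1)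
    (v' := fun x => -x * gaussianPDFReal 0 1 x)
    (fun x _ => hasDerivAt_pow n x) (fun x _ => hasDerivAt_pdf x)
    (by
      refine (integrable_pow_pdf (n + 1)).neg.congr (ae_of_all _ fun x => ?_)
      simp; ring)
    (by
      refine ((integrable_pow_pdf (n - 1)).const_mul (n : ℝ)).congr (ae_of_all _ fun x => ?_)
      simp; ring)
    (integrable_pow_pdf n)
  have e1 : ∫ x : ℝ, x ^ n * (-x * gaussianPDFReal 0 1 x) = - gmom (n + 1) := by
    rw [gmom_eq, ← integral_neg]
    congr 1; ext x; ring
  have e2 : ∫ x : ℝ, (n * x ^ (n - 1)) * gaussianPDFReal 0 1 x = n * gmom (n - 1) := by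
    rw [gmom_eq, ← integral_const_mul]
    congr 1; ext x; ring
  rw [e1, e2] at key
  linarith

def lprod {d : ℕ} (l : List (Fin d)) (u : Fin d → ℝ) : ℝ := (l.map u).prod

noncomputable def mom {d : ℕ} (l : List (Fin d)) : ℝ := ∫ u, lprod l u ∂(stdGaussianVec d)

lemma lprod_eq {d : ℕ} (l : List (Fin d)) (u : Fin d → ℝ) :
    lprod l u = ∏ i, u i ^ l.count i := by
  rw [lprod, Finset.prod_list_map_count]
  refine Finset.prod_subset (Finset.subset_univ _) fun x _ hx => ?_
  rw [List.mem_toFinset] at hx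
  rw [List.count_eq_zero_of_not_mem hx, pow_zero]

lemma integrable_lprod {d : ℕ} (l : List (Fin d)) : Integrable (lprod l) (stdGaussianVec d) := by
  have : lprod l = fun u => ∏ i, u i ^ l.count i := funext (lprod_eq l)
  rw [this]
  exact Integrable.fintype_prod (f := fun i (x : ℝ) => x ^ l.count i)
    (fun i => integrable_pow_gauss _)

lemma mom_eq {d : ℕ} (l : List (Fin d)) : mom l = ∏ i, gmom (l.count i) := by
  unfold mom gmom stdGaussianVec
  rw [← integral_fintype_prod_eq_prod]
  congr 1; ext u; exact lprod_eq l u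

def dl {d : ℕ} (i j : Fin d) : ℝ := if i = j then 1 else 0

lemma sum_dl {d : ℕ} (i : Fin d) (l : List (Fin d)) :
    ∑ m : Fin l.length, dl i l[m] = l.count i := by
  induction l with
  | nil => simp
  | cons a l ih =>
    have : ∑ m : Fin (a :: l).length, dl i (a :: l)[m] = dl i a + ∑ m : Fin l.length, dl i l[m] :=
      Fin.sum_univ_succ (n := l.length) (fun m => dl i (a :: l)[m])
    rw [this, ih, List.count_cons, dl]
    by_cases h : i = a
    · simp [h, add_comm]
    · simp [h, Ne.symm h]

lemma wick {d : ℕ} (i : Fin d) (l : List (Fin d)) :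
    mom (i :: l) = ∑ m : Fin l.length, dl i l[m] * mom (l.eraseIdx m) := by
  have hterm : ∀ m : Fin l.length, dl i l[m] * mom (l.eraseIdx m) =
      dl i l[m] * (gmom (l.count i - 1) * ∏ k ∈ univ.erase i, gmom (l.count k)) := by
    intro m
    unfold dl
    split_ifs with h
    · have hp : ∀ k, l.count k = (l[m] :: l.eraseIdx m).count k := fun k =>
        ((List.getElem_cons_eraseIdx_perm m.2).count_eq k).symm
      rw [mom_eq, ← Finset.mul_prod_erase univ _ (Finset.mem_univ i)]
      congr 2
      · rw [hp i, List.count_cons, ← h]; simp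
      · refine Finset.prod_congr rfl fun k hk => ?_
        rw [hp k, List.count_cons, ← h]
        simp [(Finset.ne_of_mem_erase hk).symm]
    · simp
  rw [Finset.sum_congr rfl fun m _ => hterm m, ← Finset.sum_mul, sum_dl, mom_eq,
    ← Finset.mul_prod_erase univ _ (Finset.mem_univ i), List.count_cons_self, gmom_rec, mul_assoc]
  congr 2
  refine Finset.prod_congr rfl fun k hk => ?_
  rw [List.count_cons_of_ne (Finset.ne_of_mem_erase hk).symm]

lemma mom_nil {d : ℕ} : mom ([] : List (Fin d)) = 1 := by simp [mom, lprod]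

lemma mom2 {d : ℕ} (a b : Fin d) : mom [a, b] = dl a b := by
  rw [wick]; simp [mom_nil]

lemma mom4 {d : ℕ} (a b c e : Fin d) :
    mom [a, b, c, e] = dl a b * dl c e + dl a c * dl b e + dl a e * dl b c := by
  rw [wick]; simp [Fin.sum_univ_succ, mom2]; ring

lemma mom6 {d : ℕ} (a b c e f g : Fin d) :
    mom [a, b, c, e, f, g] = dl a b * mom [c, e, f, g] + dl a c * mom [b, e, f, g]
      + dl a e * mom [b, c, f, g] + dl a f * mom [b, c, e, g] + dl a g * mom [b, c, e, f] := by
  rw [wick]; simp [Fin.sum_univ_succ]; ring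

lemma mom8 {d : ℕ} (a b c e f g h i : Fin d) :
    mom [a, b, c, e, f, g, h, i] = dl a b * mom [c, e, f, g, h, i] + dl a c * mom [b, e, f, g, h, i]
      + dl a e * mom [b, c, f, g, h, i] + dl a f * mom [b, c, e, g, h, i]
      + dl a g * mom [b, c, e, f, h, i] + dl a h * mom [b, c, e, f, g, i]
      + dl a i * mom [b, c, e, f, g, h] := by
  rw [wick]; simp [Fin.sum_univ_succ]; ring

lemma dl_self {d : ℕ} (p : Fin d) : dl p p = 1 := by simp [dl]

lemma comb8 {d : ℕ} (i j k l p : Fin d) :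
    mom [i, j, k, l, p, p, p, p] - 2 * mom [i, j, k, l, p, p] + mom [i, j, k, l] =
      24 * (dl i p * dl j p * dl k p * dl l p)
      + 8 * (dl i p * dl j p * dl k l + dl k p * dl l p * dl i j + dl i p * dl k p * dl j l
        + dl i p * dl l p * dl j k + dl j p * dl k p * dl i l + dl j p * dl l p * dl i k)
      + 2 * (dl i j * dl k l + dl i k * dl j l + dl i l * dl j k) := by
  simp only [mom8, mom6, mom4, dl_self]
  ring

def Yf {d : ℕ} (A : Matrix (Fin d) (Fin d) ℝ) (p : Fin d) (u : Fin d → ℝ) : ℝ :=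
  quadForm A u * ((u p) ^ 2 - 1)

lemma Yf_eq {d : ℕ} (A : Matrix (Fin d) (Fin d) ℝ) (p : Fin d) (u : Fin d → ℝ) :
    Yf A p u = ∑ i, ∑ j, A i j * (lprod [i, j, p, p] u - lprod [i, j] u) := by
  unfold Yf quadForm
  simp only [Finset.sum_mul]
  refine Finset.sum_congr rfl fun i _ => Finset.sum_congr rfl fun j _ => ?_
  simp [lprod]; ring

lemma Yf_sq_eq {d : ℕ} (A : Matrix (Fin d) (Fin d) ℝ) (p : Fin d) (u : Fin d → ℝ) :
    Yf A p u ^ 2 = ∑ i, ∑ j, ∑ k, ∑ l, A i j * A k l *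
      (lprod [i, j, k, l, p, p, p, p] u - 2 * lprod [i, j, k, l, p, p] u
        + lprod [i, j, k, l] u) := by
  rw [sq, Yf_eq]
  simp only [Finset.sum_mul]
  refine Finset.sum_congr rfl fun i _ => Finset.sum_congr rfl fun j _ => ?_
  simp only [Finset.mul_sum]
  refine Finset.sum_congr rfl fun k _ => Finset.sum_congr rfl fun l _ => ?_
  simp [lprod]; ring

lemma integrable_t2 {d : ℕ} (c : ℝ) (l l' : List (Fin d)) :
    Integrable (fun u => c * (lprod l u - lprod l' u)) (stdGaussianVec d) :=
  ((integrable_lprod l).sub (integrable_lprod l')).const_mul c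

lemma integral_t2 {d : ℕ} (c : ℝ) (l l' : List (Fin d)) :
    ∫ u, c * (lprod l u - lprod l' u) ∂(stdGaussianVec d) = c * (mom l - mom l') := by
  rw [integral_const_mul, integral_sub (integrable_lprod l) (integrable_lprod l')]
  rfl

lemma integrable_t3 {d : ℕ} (c : ℝ) (l l' l'' : List (Fin d)) :
    Integrable (fun u => c * (lprod l u - 2 * lprod l' u + lprod l'' u)) (stdGaussianVec d) :=
  (((integrable_lprod l).sub ((integrable_lprod l').const_mul 2)).add
    (integrable_lprod l'')).const_mul c

lemma integral_t3 {d : ℕ} (c : ℝ) (l l' l'' : List (Fin d)) :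
    ∫ u, c * (lprod l u - 2 * lprod l' u + lprod l'' u) ∂(stdGaussianVec d)
      = c * (mom l - 2 * mom l' + mom l'') := by
  have h := (integrable_lprod l).sub ((integrable_lprod l').const_mul 2)
  have h' : Integrable (fun u => lprod l u - 2 * lprod l' u) (stdGaussianVec d) := h
  rw [integral_const_mul, integral_add h' (integrable_lprod l''),
    integral_sub (integrable_lprod l) ((integrable_lprod l').const_mul 2), integral_const_mul]
  rfl

lemma integrable_Yf {d : ℕ} (A : Matrix (Fin d) (Fin d) ℝ) (p : Fin d) :
    Integrable (Yf A p) (stdGaussianVec d) := by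
  rw [funext (Yf_eq A p)]
  exact integrable_finsetSum _ fun i _ => integrable_finsetSum _ fun j _ => integrable_t2 _ _ _

lemma integrable_Yf_sq {d : ℕ} (A : Matrix (Fin d) (Fin d) ℝ) (p : Fin d) :
    Integrable (fun u => Yf A p u ^ 2) (stdGaussianVec d) := by
  rw [funext (Yf_sq_eq A p)]
  exact integrable_finsetSum _ fun i _ => integrable_finsetSum _ fun j _ =>
    integrable_finsetSum _ fun k _ => integrable_finsetSum _ fun l _ => integrable_t3 _ _ _ _

lemma memLp_Yf {d : ℕ} (A : Matrix (Fin d) (Fin d) ℝ) (p : Fin d) :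
    MemLp (Yf A p) 2 (stdGaussianVec d) :=
  (memLp_two_iff_integrable_sq (integrable_Yf A p).1).2 (integrable_Yf_sq A p)

lemma integral_dbl {d : ℕ} (c : Fin d → Fin d → ℝ) (l l' : Fin d → Fin d → List (Fin d)) :
    ∫ u, ∑ i, ∑ j, c i j * (lprod (l i j) u - lprod (l' i j) u) ∂(stdGaussianVec d)
      = ∑ i, ∑ j, c i j * (mom (l i j) - mom (l' i j)) := by
  rw [integral_finsetSum _ fun i _ => integrable_finsetSum _ fun j _ => integrable_t2 _ _ _]
  refine Finset.sum_congr rfl fun i _ => ?_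
  rw [integral_finsetSum _ fun j _ => integrable_t2 _ _ _]
  exact Finset.sum_congr rfl fun j _ => integral_t2 _ _ _

lemma mean_Yf {d : ℕ} (A : Matrix (Fin d) (Fin d) ℝ) (p : Fin d) :
    ∫ u, Yf A p u ∂(stdGaussianVec d) = 2 * A p p := by
  simp only [Yf_eq]
  rw [integral_dbl (fun i j => A i j) (fun i j => [i, j, p, p]) (fun i j => [i, j])]
  have : ∀ i j : Fin d, A i j * (mom [i, j, p, p] - mom [i, j]) = 2 * (dl i p * dl j p * A i j) := by
    intro i j
    rw [mom4, mom2, dl_self]; ring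
  simp_rw [this, ← Finset.mul_sum]
  simp [dl]

lemma sq_Yf {d : ℕ} (A : Matrix (Fin d) (Fin d) ℝ) (p : Fin d) :
    ∫ u, Yf A p u ^ 2 ∂(stdGaussianVec d) =
      24 * A p p ^ 2 + 16 * A p p * (∑ i, A i i) + 8 * (∑ j, (A p j + A j p) ^ 2)
        + 2 * (∑ i, A i i) ^ 2 + ∑ i, ∑ j, (A i j + A j i) ^ 2 := by
  rw [funext (Yf_sq_eq A p)]
  rw [integral_finsetSum _ fun i _ => integrable_finsetSum _ fun j _ =>
    integrable_finsetSum _ fun k _ => integrable_finsetSum _ fun l _ => integrable_t3 _ _ _ _]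
  simp_rw [integral_finsetSum _ fun j _ => integrable_finsetSum _ fun k _ =>
    integrable_finsetSum _ fun l _ => integrable_t3 _ _ _ _]
  simp_rw [integral_finsetSum _ fun k _ =>
    integrable_finsetSum _ fun l _ => integrable_t3 _ _ _ _]
  simp_rw [integral_finsetSum _ fun l _ => integrable_t3 _ _ _ _, integral_t3, comb8]
  have e : ∀ i j k l : Fin d, A i j * A k l * (24 * (dl i p * dl j p * dl k p * dl l p)
      + 8 * (dl i p * dl j p * dl k l + dl k p * dl l p * dl i j + dl i p * dl k p * dl j l
        + dl i p * dl l p * dl j k + dl j p * dl k p * dl i l + dl j p * dl l p * dl i k)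
      + 2 * (dl i j * dl k l + dl i k * dl j l + dl i l * dl j k)) =
      24 * ((dl i p * (dl j p * A i j)) * (dl k p * (dl l p * A k l)))
      + 8 * ((dl i p * (dl j p * A i j)) * (dl k l * A k l))
      + 8 * ((dl i j * A i j) * (dl k p * (dl l p * A k l)))
      + 8 * (dl i p * (dl k p * (dl j l * (A i j * A k l))))
      + 8 * (dl i p * (dl l p * (dl j k * (A i j * A k l))))
      + 8 * (dl j p * (dl k p * (dl i l * (A i j * A k l))))
      + 8 * (dl j p * (dl l p * (dl i k * (A i j * A k l))))
      + 2 * ((dl i j * A i j) * (dl k l * A k l))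
      + 2 * (dl i k * (dl j l * (A i j * A k l)))
      + 2 * (dl i l * (dl j k * (A i j * A k l))) := by
    intros; ring
  simp_rw [e, Finset.sum_add_distrib, ← Finset.mul_sum, ← Finset.sum_mul]
  simp only [dl, ite_mul, one_mul, zero_mul, Finset.sum_ite_eq, Finset.sum_ite_eq',
    Finset.mem_univ, if_true, Finset.sum_ite_irrel, Finset.sum_const_zero]
  have h1 : ∑ j, (A p j + A j p) ^ 2 = ∑ j, A p j * A p j + ∑ j, A p j * A j p
      + ∑ j, A j p * A p j + ∑ j, A j p * A j p := by
    simp only [← Finset.sum_add_distrib]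
    exact Finset.sum_congr rfl fun j _ => by ring
  have h2 : ∑ i, ∑ j, (A i j + A j i) ^ 2 = 2 * ∑ i, ∑ j, A i j * A i j
      + 2 * ∑ i, ∑ j, A i j * A j i := by
    have h3 : ∑ i, ∑ j, A j i * A j i = ∑ i, ∑ j, A i j * A i j := Finset.sum_comm
    have : ∑ i, ∑ j, (A i j + A j i) ^ 2 = ∑ i, ∑ j, A i j * A i j + ∑ i, ∑ j, A j i * A j i
      + 2 * ∑ i, ∑ j, A i j * A j i := by
      simp only [← Finset.sum_add_distrib, Finset.mul_sum]
      exact Finset.sum_congr rfl fun i _ => Finset.sum_congr rfl fun j _ => by ring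
    rw [this, h3]; ring
  rw [h1, h2]
  ring

lemma sum_var_Yf {d : ℕ} (A : Matrix (Fin d) (Fin d) ℝ) :
    ∑ p, Var[Yf A p; stdGaussianVec d] =
      (2 * (d : ℝ) + 16) * (∑ i, A i i) ^ 2
          + ((d : ℝ) + 8) * (∑ i, ∑ j, (A i j + A j i) ^ 2)
          + 20 * ∑ i, (A i i) ^ 2 := by
  have h : ∀ p, Var[Yf A p; stdGaussianVec d] =
      20 * A p p ^ 2 + 16 * A p p * (∑ i, A i i) + 8 * (∑ j, (A p j + A j p) ^ 2)
        + 2 * (∑ i, A i i) ^ 2 + ∑ i, ∑ j, (A i j + A j i) ^ 2 := by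
    intro p
    rw [variance_eq_sub (memLp_Yf A p), mean_Yf]
    have := sq_Yf A p
    simp only [Pi.pow_apply]
    rw [this]; ring
  simp_rw [h, Finset.sum_add_distrib, ← Finset.sum_mul, ← Finset.mul_sum]
  simp only [Finset.sum_const, Finset.card_univ, Fintype.card_fin, nsmul_eq_mul]
  ring

lemma var_g {d : ℕ} (A : Matrix (Fin d) (Fin d) ℝ) (N : ℕ) (hN : 0 < N) (p : Fin d) :
    Integrable (fun w : Fin N → Fin d → ℝ =>
      ((1 / (2 * (N : ℝ))) * (∑ j, Yf A p (w j)) - A p p) ^ 2)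
        (Measure.pi fun _ : Fin N => stdGaussianVec d) ∧
    ∫ w, ((1 / (2 * (N : ℝ))) * (∑ j : Fin N, Yf A p (w j)) - A p p) ^ 2
      ∂(Measure.pi fun _ : Fin N => stdGaussianVec d)
      = Var[Yf A p; stdGaussianVec d] / (4 * N) := by
  have hN' : (N : ℝ) ≠ 0 := by positivity
  set μ := (Measure.pi fun _ : Fin N => stdGaussianVec d) with hμ
  have hmem : ∀ j : Fin N, MemLp (fun w : Fin N → Fin d → ℝ => Yf A p (w j)) 2 μ := fun j =>
    (memLp_Yf A p).comp_measurePreserving (measurePreserving_eval (fun _ => stdGaussianVec d) j)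
  have hS : MemLp (fun w : Fin N → Fin d → ℝ => ∑ j, Yf A p (w j)) 2 μ :=
    memLp_finsetSum _ fun j _ => hmem j
  have hG : MemLp (fun w : Fin N → Fin d → ℝ => (1 / (2 * (N : ℝ))) * ∑ j, Yf A p (w j)) 2 μ :=
    hS.const_mul _
  have hmean : ∫ w, (1 / (2 * (N : ℝ))) * (∑ j : Fin N, Yf A p (w j)) ∂μ = A p p := by
    rw [integral_const_mul, integral_finsetSum _ fun j _ => (hmem j).integrable (by norm_num)]
    have : ∀ j : Fin N, ∫ w, Yf A p (w j) ∂μ = 2 * A p p := fun j => by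
      rw [← mean_Yf A p]
      exact integral_comp_eval (integrable_Yf A p).1
    simp only [this, Finset.sum_const, Finset.card_univ, Fintype.card_fin, nsmul_eq_mul]
    field_simp
  have hvarS : Var[fun w : Fin N → Fin d → ℝ => ∑ j, Yf A p (w j); μ]
      = N * Var[Yf A p; stdGaussianVec d] := by
    have := variance_sum_pi (μ := fun _ : Fin N => stdGaussianVec d) (X := fun _ => Yf A p)
      (fun _ => memLp_Yf A p)
    rw [Finset.sum_const, Finset.card_univ, Fintype.card_fin, nsmul_eq_mul] at this
    rw [← this]
    congr 1
    ext w; simp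
  refine ⟨(hG.sub (memLp_const (A p p))).integrable_sq, ?_⟩
  have hv := variance_eq_integral hG.aestronglyMeasurable.aemeasurable
  rw [hmean] at hv
  rw [← hv, variance_const_mul, hvarS]
  field_simp
  ring

theorem normwise_sample_complexity {d : ℕ} (hd : 1 ≤ d)
    (A : Matrix (Fin d) (Fin d) ℝ)
    (δ ε : ℝ) (hδ0 : 0 < δ) (hδ1 : δ < 1) (hε : 0 < ε)
    (hA : 0 < ∑ i, (A i i) ^ 2)
    (N : ℕ) (hN : 0 < N)
    (hNge : (N : ℝ) ≥
      (1 / (4 * ε * δ)) *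
        (((4 * (d : ℝ) + 16) * (∑ i, A i i) ^ 2
          + ((d : ℝ) + 8) * (∑ i, ∑ j, (A i j + A j i) ^ 2)
          + 20 * ∑ i, (A i i) ^ 2) / (∑ i, (A i i) ^ 2))) :
    ENNReal.ofReal (1 - δ) ≤
      (Measure.pi fun _ : Fin N => stdGaussianVec d)
        {w | ∑ p, ((1 / (2 * (N : ℝ))) *
                (∑ j, quadForm A (w j) * ((w j p) ^ 2 - 1)) - A p p) ^ 2
              ≤ ε * ∑ i, (A i i) ^ 2} := by
  set μ := (Measure.pi fun _ : Fin N => stdGaussianVec d) with hμ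
  set D := ∑ i, (A i i) ^ 2 with hD
  set Z : (Fin N → Fin d → ℝ) → ℝ := fun w => ∑ p, ((1 / (2 * (N : ℝ))) *
                (∑ j, Yf A p (w j)) - A p p) ^ 2 with hZ
  change ENNReal.ofReal (1 - δ) ≤ μ {w | Z w ≤ ε * D}
  have hZint : Integrable Z μ := integrable_finsetSum _ fun p _ => (var_g A N hN p).1
  have hZval : ∫ w, Z w ∂μ = (∑ p, Var[Yf A p; stdGaussianVec d]) / (4 * N) := by
    rw [hZ, integral_finsetSum _ fun p _ => (var_g A N hN p).1, Finset.sum_div]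
    exact Finset.sum_congr rfl fun p _ => (var_g A N hN p).2
  have hNpos : (0 : ℝ) < N := by exact_mod_cast hN
  have hbound : ∫ w, Z w ∂μ ≤ ε * D * δ := by
    rw [hZval, sum_var_Yf, div_le_iff₀ (by positivity)]
    have h1 : (4 * (d : ℝ) + 16) * (∑ i, A i i) ^ 2
          + ((d : ℝ) + 8) * (∑ i, ∑ j, (A i j + A j i) ^ 2)
          + 20 * D ≤ N * (4 * ε * δ * D) := by
      rw [ge_iff_le, one_div, ← div_eq_inv_mul, div_div, div_le_iff₀ (by positivity)] at hNge
      linarith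
    have h2 : 0 ≤ (d : ℝ) * (∑ i, A i i) ^ 2 := by positivity
    linarith
  have hZ0 : 0 ≤ᵐ[μ] Z := ae_of_all _ fun w => Finset.sum_nonneg fun p _ => sq_nonneg _
  have hmk := mul_meas_ge_le_integral_of_nonneg hZ0 hZint (ε * D)
  have hED : 0 < ε * D := by positivity
  have hle : μ.real {w | ε * D ≤ Z w} ≤ δ :=
    le_of_mul_le_mul_left (hmk.trans hbound) hED
  have hmono : μ.real {w | Z w ≤ ε * D}ᶜ ≤ δ := by
    refine (measureReal_mono ?_).trans hle
    intro w hw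
    simp only [Set.mem_compl_iff, Set.mem_ofPred_eq, not_le] at hw ⊢
    exact hw.le
  have htot : (1 : ℝ) ≤ μ.real {w | Z w ≤ ε * D} + μ.real {w | Z w ≤ ε * D}ᶜ := by
    have := measureReal_union_le (μ := μ) {w | Z w ≤ ε * D} {w | Z w ≤ ε * D}ᶜ
    rwa [Set.union_compl_self, probReal_univ] at this
  rw [ENNReal.ofReal_le_iff_le_toReal (measure_ne_top _ _)]
  change 1 - δ ≤ μ.real {w | Z w ≤ ε * D}
  linarith
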